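/- arXiv:1711.08703 — 2 statements merged into one kernel-verified Lean document; each statement's English description precedes it below -/
import Mathlib

section
/- Let H be a separable infinite-dimensional complex Hilbert space and let U(H) be its unitary group with the strong operator topology. For every positive integer n, the map f_n : U(H) → U(H) defined by f_n(u) = uⁿ is category preserving, i.e., the preimage under f_n of every comeager subset of U(H) is comeager. -/
open MeasureTheory Topology

/-- The unitary group `U(H)` of a complex Hilbert space `H`, to be equipped with the strong
operator topology. -/
def UnitarySOT (H : Type*) [NormedAddCommGroup H] [InnerProductSpace ℂ H]
    [CompleteSpace H] : Type _ :=
  unitary (H →L[ℂ] H)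

noncomputable instance {H : Type*} [NormedAddCommGroup H] [InnerProductSpace ℂ H]
    [CompleteSpace H] : Group (UnitarySOT H) :=
  inferInstanceAs (Group (unitary (H →L[ℂ] H)))

/-- The strong operator topology on `U(H)`: the topology of pointwise norm convergence,
i.e. the topology induced by the inclusion of `U(H)` into `H → H` with the product topology. -/
instance {H : Type*} [NormedAddCommGroup H] [InnerProductSpace ℂ H] [CompleteSpace H] :
    TopologicalSpace (UnitarySOT H) :=
  TopologicalSpace.induced
    (fun (u : unitary (H →L[ℂ] H)) (x : H) => (u : H →L[ℂ] H) x)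
    (inferInstance : TopologicalSpace (H → H))

/-!
It suffices that the continuous map `u ↦ uⁿ` is *nearly open* at a dense set of points `w` (the
closure of the image of every neighbourhood of `w` is a neighbourhood of `wⁿ`), for then preimages
of dense open sets are dense.

The points in question are the unitaries of finite order coprime to `n`. They are dense: on
finitely many vectors, `u` agrees with a unitary of a finite-dimensional subspace, whose eigenvalues
can be moved to the nearest `N`-th roots of unity, with `N` large and coprime to `n`.

If `w` has order coprime to `n`, then `w = (wⁿ)ᵏ` for some `k`. For `g` of finite order, let `v` be
the `n`-th root of `g` obtained by replacing each eigenvalue `z` of `g` by the `n`-th root of `z`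
closest to `zᵏ`. Then `‖v x - gᵏ x‖ ≤ π / (2n) * ‖g x - gᵏⁿ x‖` for all `x`, and as `g` tends
strongly to `wⁿ` the right-hand side tends to `0` while `gᵏ x` tends to `w x`; so `v` tends to `w`.
-/

open Filter Set
open scoped Real

section NearlyOpen

variable {X Y : Type*} [TopologicalSpace X] [TopologicalSpace Y] {f : X → Y}

/-- `f` is nearly open at `x`: images of neighbourhoods of `x` are dense in neighbourhoods of
`f x`. -/
def NearlyOpenAt (f : X → Y) (x : X) : Prop :=
  ∀ W ∈ 𝓝 x, closure (f '' W) ∈ 𝓝 (f x)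

lemma dense_preimage_of_dense_nearlyOpenAt {S : Set Y} (hS : Dense S) (hSo : IsOpen S)
    (hf : Dense {x | NearlyOpenAt f x}) : Dense (f ⁻¹' S) := by
  refine dense_iff_inter_open.2 fun W hW hWne ↦ ?_
  obtain ⟨w, hwW, hw⟩ := hf.inter_open_nonempty W hW hWne
  obtain ⟨y, hyW, hyS⟩ := hS.inter_nhds_nonempty (hw W (hW.mem_nhds hwW))
  obtain ⟨_, hvS, v, hvW, rfl⟩ := mem_closure_iff.1 hyS S hSo hyW
  exact ⟨v, hvW, hvS⟩

lemma tendsto_residual_of_dense_nearlyOpenAt (hc : Continuous f)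
    (hf : Dense {x | NearlyOpenAt f x}) : Tendsto f (residual X) (residual Y) := by
  apply le_countableGenerate_iff_of_countableInterFilter.mpr
  rintro S ⟨hSo, hS⟩
  exact residual_of_dense_open (hSo.preimage hc) (dense_preimage_of_dense_nearlyOpenAt hS hSo hf)

lemma nearlyOpenAt_of_tendsto_section {D : Set Y} (hD : Dense D) {x : X} {r : Y → X}
    (hr : ∀ y ∈ D, f (r y) = y) (hrx : Tendsto r (𝓝[D] (f x)) (𝓝 x)) : NearlyOpenAt f x := by
  intro W hW
  have himage : f '' W ∈ 𝓝[D] (f x) := by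
    filter_upwards [hrx hW, self_mem_nhdsWithin] with y hy hyD
    exact ⟨r y, hy, hr y hyD⟩
  obtain ⟨O, hO, hxO, hOW⟩ := mem_nhdsWithin.1 himage
  exact mem_of_superset (hO.mem_nhds hxO)
    ((hD.open_subset_closure_inter hO).trans (closure_mono hOW))

end NearlyOpen

section Scalars

lemma exists_pow_eq_and_norm_sub_le {n : ℕ} (hn : n ≠ 0) {z l : ℂ} (hz : ‖z‖ = 1)
    (hl : ‖l‖ = 1) : ∃ r : ℂ, r ^ n = z ∧ ‖r - l‖ ≤ π / (2 * n) * ‖z - l ^ n‖ := by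
  have hl0 : l ≠ 0 := norm_ne_zero_iff.1 (by simp [hl])
  set y := z / l ^ n with hy
  have hy1 : ‖y‖ = 1 := by simp [hy, hz, hl]
  have hy0 : y ≠ 0 := norm_ne_zero_iff.1 (by simp [hy1])
  have hzy : z = l ^ n * y := by rw [hy]; field_simp
  have hyexp : Complex.exp (y.arg * Complex.I) = y := by
    simpa [hy1] using Complex.norm_mul_exp_arg_mul_I y
  have harg : |y.arg| ≤ π / 2 * ‖y - 1‖ := by
    simpa [Complex.angle_one_right hy0] using Complex.angle_le_mul_norm_sub hy1 norm_one
  have hdist : ‖z - l ^ n‖ = ‖y - 1‖ := by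
    rw [hzy, ← mul_sub_one, norm_mul, norm_pow, hl, one_pow, one_mul]
  refine ⟨l * Complex.exp (Complex.I * (y.arg / n : ℝ)), ?_, ?_⟩
  · have hnC : (n : ℂ) ≠ 0 := by exact_mod_cast hn
    have hangle : (n : ℂ) * (Complex.I * (y.arg / n : ℝ)) = y.arg * Complex.I := by
      push_cast; field_simp
    rw [mul_pow, ← Complex.exp_nat_mul, hangle, hyexp, ← hzy]
  · calc ‖l * Complex.exp (Complex.I * (y.arg / n : ℝ)) - l‖
        = ‖Complex.exp (Complex.I * (y.arg / n : ℝ)) - 1‖ := by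
          rw [← mul_sub_one, norm_mul, hl, one_mul]
      _ ≤ |y.arg| / n := by
          simpa [abs_div] using Real.norm_exp_I_mul_ofReal_sub_one_le (x := y.arg / n)
      _ ≤ π / 2 * ‖y - 1‖ / n := by gcongr
      _ = π / (2 * n) * ‖z - l ^ n‖ := by rw [hdist]; ring

end Scalars

section FiniteSpectrum

lemma finite_spectrum_of_isIntegral {𝕜 A : Type*} [Field 𝕜] [Ring A] [Algebra 𝕜 A] {a : A}
    (ha : IsIntegral 𝕜 a) : (spectrum 𝕜 a).Finite := by
  nontriviality A
  refine (minpoly 𝕜 a).rootSet_finite 𝕜 |>.subset fun z hz ↦ ?_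
  have hroot := spectrum.subset_polynomial_aeval a (minpoly 𝕜 a) ⟨z, hz, rfl⟩
  rw [minpoly.aeval, spectrum.zero_eq, mem_singleton_iff] at hroot
  simpa [Polynomial.mem_rootSet, minpoly.ne_zero ha] using hroot

variable {A : Type*} [CStarAlgebra A]

lemma exists_cfc_eq_mul_cfc {a : A} (ha : (spectrum ℂ a).Finite) {f h : ℂ → ℂ}
    {C : ℝ} (hC : 0 ≤ C) (hfh : ∀ z ∈ spectrum ℂ a, ‖f z‖ ≤ C * ‖h z‖) :
    ∃ c : A, ‖c‖ ≤ C ∧ cfc f a = c * cfc h a := by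
  refine ⟨cfc (fun z ↦ f z / h z) a, norm_cfc_le hC fun z hz ↦ ?_, ?_⟩
  · rw [norm_div]
    exact div_le_of_le_mul₀ (norm_nonneg _) hC (hfh z hz)
  · rw [← cfc_mul _ _ _ (ha.continuousOn _) (ha.continuousOn _)]
    refine cfc_congr fun z hz ↦ (div_mul_cancel_of_imp fun hz0 ↦ ?_).symm
    simpa [hz0] using hfh z hz

lemma cfc_mem_unitary_of_finite_spectrum {a : A} [IsStarNormal a] (ha : (spectrum ℂ a).Finite)
    {f : ℂ → ℂ} (hf : ∀ z ∈ spectrum ℂ a, ‖f z‖ = 1) : cfc f a ∈ unitary A := by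
  rw [cfc_unitary_iff f a (by cfc_tac) (ha.continuousOn f)]
  intro z hz
  simp [Complex.conj_mul', hf z hz]

lemma exists_pow_eq_pow_and_sub_eq_mul {g : unitary A} (hg : (spectrum ℂ (g : A)).Finite)
    {n : ℕ} (hn : n ≠ 0) (i j : ℕ) :
    ∃ v : unitary A, v ^ n = g ^ i ∧ ∃ c : A, ‖c‖ ≤ π / (2 * n) ∧
      (v - g ^ j : A) = c * (g ^ i - (g ^ j) ^ n) := by
  have hroot (z : ℂ) : ∃ r : ℂ, ‖z‖ = 1 → r ^ n = z ^ i ∧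
      ‖r - z ^ j‖ ≤ π / (2 * n) * ‖z ^ i - (z ^ j) ^ n‖ := by
    by_cases hz : ‖z‖ = 1
    · obtain ⟨r, hr⟩ := exists_pow_eq_and_norm_sub_le hn (z := z ^ i) (l := z ^ j)
        (by simp [hz]) (by simp [hz])
      exact ⟨r, fun _ ↦ hr⟩
    · exact ⟨0, fun h ↦ absurd h hz⟩
  choose r hr using hroot
  have hnorm (z) (hz : z ∈ spectrum ℂ (g : A)) : ‖z‖ = 1 := by
    simpa using spectrum.subset_circle_of_unitary g.2 hz
  have hrnorm (z) (hz : z ∈ spectrum ℂ (g : A)) : ‖r z‖ = 1 := by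
    rw [← pow_eq_one_iff_of_nonneg (norm_nonneg _) hn, ← norm_pow, (hr z (hnorm z hz)).1,
      norm_pow, hnorm z hz, one_pow]
  obtain ⟨c, hc, hcr⟩ := exists_cfc_eq_mul_cfc (f := fun z ↦ r z - z ^ j)
    (h := fun z ↦ z ^ i - (z ^ j) ^ n) hg (by positivity) fun z hz ↦ (hr z (hnorm z hz)).2
  refine ⟨⟨cfc r (g : A), cfc_mem_unitary_of_finite_spectrum hg hrnorm⟩, ?_, c, hc, ?_⟩
  · ext
    simp only [SubmonoidClass.coe_pow]
    rw [← cfc_pow _ _ _ (hg.continuousOn _), ← cfc_pow_id (R := ℂ) (g : A) i]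
    exact cfc_congr fun z hz ↦ (hr z (hnorm z hz)).1
  · rw [cfc_sub _ _ _ (hg.continuousOn _) (hg.continuousOn _),
      cfc_sub _ _ _ (hg.continuousOn _) (hg.continuousOn _),
      cfc_pow _ n _ (hg.continuousOn _), cfc_pow_id (g : A), cfc_pow_id (g : A)] at hcr
    exact hcr

lemma exists_pow_eq_one_and_norm_sub_le {u : unitary A} (hu : (spectrum ℂ (u : A)).Finite)
    {n : ℕ} (hn : n ≠ 0) : ∃ t : unitary A, t ^ n = 1 ∧ ‖(t - u : A)‖ ≤ π / n := by
  obtain ⟨t, ht, c, hc, htu⟩ := exists_pow_eq_pow_and_sub_eq_mul hu hn 0 1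
  refine ⟨t, by simpa using ht, ?_⟩
  have hle : ‖(u ^ 0 - (u ^ 1) ^ n : A)‖ ≤ 2 := by
    refine (norm_sub_le _ _).trans ?_
    nontriviality A
    have hun : ‖(u ^ n : A)‖ = 1 := CStarRing.norm_of_mem_unitary (pow_mem u.2 n)
    rw [pow_zero, pow_one, hun, CStarRing.norm_one, one_add_one_eq_two]
  calc ‖(t - u : A)‖ = ‖c * ((u : A) ^ 0 - (u ^ 1) ^ n)‖ := by rw [← htu, pow_one]
    _ ≤ π / (2 * n) * 2 := norm_mul_le_of_le hc hle
    _ = π / n := by ring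

end FiniteSpectrum

section ExtendByOne

variable {𝕜 E : Type*} [RCLike 𝕜] [NormedAddCommGroup E] [InnerProductSpace 𝕜 E] [CompleteSpace E]

/-- The operator on `E` acting as `T` on the subspace `V` and as the identity on `Vᗮ`. -/
noncomputable def extendByOne (V : Submodule 𝕜 E) [CompleteSpace V] :
    (V →L[𝕜] V) →⋆* (E →L[𝕜] E) where
  toFun T := V.subtypeL ∘L T ∘L V.orthogonalProjectionOnto + (1 - V.starProjection)
  map_one' := by ext x; simp
  map_mul' S T := by
    ext x
    have hP : V.orthogonalProjectionOnto (V.starProjection x) = V.orthogonalProjectionOnto x :=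
      V.orthogonalProjectionOnto_mem_subspace_eq_self (V.orthogonalProjectionOnto x)
    have hPP : V.starProjection (V.starProjection x) = V.starProjection x :=
      DFunLike.congr_fun V.isIdempotentElem_starProjection.eq x
    simp [hP, hPP]
  map_star' T := by
    simp only [ContinuousLinearMap.star_eq_adjoint, map_add, map_sub,
      ContinuousLinearMap.adjoint_comp, Submodule.adjoint_subtypeL,
      Submodule.adjoint_orthogonalProjectionOnto, ContinuousLinearMap.adjoint_one,
      (isSelfAdjoint_starProjection V).adjoint_eq, ContinuousLinearMap.comp_assoc]

lemma extendByOne_apply_coe (V : Submodule 𝕜 E) [CompleteSpace V] (T : V →L[𝕜] V) (x : V) :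
    extendByOne V T x = T x := by
  simp [extendByOne]

lemma exists_finiteDimensional_unitary_eqOn (u : unitary (E →L[𝕜] E)) {X : Set E}
    (hX : X.Finite) :
    ∃ (V : Submodule 𝕜 E) (_ : FiniteDimensional 𝕜 V) (T : unitary (V →L[𝕜] V)),
      X ⊆ V ∧ ∀ x : V, (x : E) ∈ X → ((T : V →L[𝕜] V) x : E) = (u : E →L[𝕜] E) x := by
  let Y : Submodule 𝕜 E := Submodule.span 𝕜 X
  let V : Submodule 𝕜 E := Y ⊔ Y.map (u : E →L[𝕜] E).toLinearMap
  have : FiniteDimensional 𝕜 Y := FiniteDimensional.span_of_finite 𝕜 hX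
  have : FiniteDimensional 𝕜 V := inferInstance
  let L : Y.comap V.subtype →ₗᵢ[𝕜] V :=
    { toFun x := ⟨(u : E →L[𝕜] E) (x : V),
        Submodule.mem_sup_right (Submodule.mem_map_of_mem x.2)⟩
      map_add' x y := by ext; simp
      map_smul' c x := by ext; simp
      norm_map' x := ContinuousLinearMap.norm_map_of_mem_unitary u.2 _ }
  refine ⟨V, inferInstance, Unitary.linearIsometryEquiv.symm (L.extend.toLinearIsometryEquiv rfl),
    Submodule.span_le.1 le_sup_left, fun x hx ↦ ?_⟩
  exact congrArg Subtype.val (L.extend_apply ⟨x, Submodule.subset_span hx⟩)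

end ExtendByOne

section Approx

variable {H : Type*} [NormedAddCommGroup H] [InnerProductSpace ℂ H] [CompleteSpace H]

lemma exists_pow_eq_one_and_norm_sub_le_of_finiteDimensional [FiniteDimensional ℂ H]
    (u : unitary (H →L[ℂ] H)) {n : ℕ} (hn : n ≠ 0) :
    ∃ t : unitary (H →L[ℂ] H), t ^ n = 1 ∧ ‖(t - u : H →L[ℂ] H)‖ ≤ π / n :=
  exists_pow_eq_one_and_norm_sub_le (finite_spectrum_of_isIntegral (.of_finite ℂ _)) hn

lemma exists_pow_eq_one_and_norm_apply_sub_le (u : unitary (H →L[ℂ] H)) {X : Set H}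
    (hX : X.Finite) {n : ℕ} (hn : n ≠ 0) : ∃ t : unitary (H →L[ℂ] H), t ^ n = 1 ∧
      ∀ x ∈ X, ‖(t : H →L[ℂ] H) x - (u : H →L[ℂ] H) x‖ ≤ π / n * ‖x‖ := by
  obtain ⟨V, _, T, hXV, hTu⟩ := exists_finiteDimensional_unitary_eqOn u hX
  obtain ⟨t, ht, htT⟩ := exists_pow_eq_one_and_norm_sub_le_of_finiteDimensional T hn
  refine ⟨Unitary.map (extendByOne V) t, by rw [← map_pow, ht, map_one], fun x hx ↦ ?_⟩
  lift x to V using hXV hx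
  rw [Unitary.coe_map, extendByOne_apply_coe, ← hTu x hx]
  exact (t - T : V →L[ℂ] V).le_of_opNorm_le htT x

end Approx

namespace UnitarySOT

variable {H : Type*} [NormedAddCommGroup H] [InnerProductSpace ℂ H] [CompleteSpace H]

/-- The identity map from `U(H)` with the strong operator topology to Mathlib's unitary group of
`H →L[ℂ] H`, which carries the norm topology. -/
noncomputable def toUnitary : UnitarySOT H ≃* unitary (H →L[ℂ] H) :=
  MulEquiv.refl _

noncomputable instance : CoeFun (UnitarySOT H) fun _ ↦ H → H where
  coe u := (toUnitary u : H →L[ℂ] H)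

lemma isInducing_coeFn : IsInducing fun (u : UnitarySOT H) (x : H) ↦ u x := ⟨rfl⟩

lemma tendsto_nhds_iff {ι : Type*} {l : Filter ι} {f : ι → UnitarySOT H} {u : UnitarySOT H} :
    Tendsto f l (𝓝 u) ↔ ∀ x, Tendsto (fun i ↦ f i x) l (𝓝 (u x)) := by
  rw [isInducing_coeFn.tendsto_nhds_iff, tendsto_pi_nhds]
  rfl

lemma continuous_eval_const (x : H) : Continuous fun u : UnitarySOT H ↦ u x :=
  (continuous_apply x).comp isInducing_coeFn.continuous

lemma norm_apply (u : UnitarySOT H) (x : H) : ‖u x‖ = ‖x‖ :=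
  ContinuousLinearMap.norm_map_of_mem_unitary (toUnitary u).2 x

instance : ContinuousMul (UnitarySOT H) where
  continuous_mul := by
    refine continuous_iff_continuousAt.2 fun ⟨u, v⟩ ↦ tendsto_nhds_iff.2 fun x ↦ ?_
    have hlim : Tendsto (fun p : UnitarySOT H × UnitarySOT H ↦
        ‖p.2 x - v x‖ + ‖p.1 (v x) - u (v x)‖) (𝓝 (u, v)) (𝓝 0) := by
      have hcont : Continuous fun p : UnitarySOT H × UnitarySOT H ↦
          ‖p.2 x - v x‖ + ‖p.1 (v x) - u (v x)‖ :=
        (((continuous_eval_const x).comp continuous_snd).sub continuous_const).norm.add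
          (((continuous_eval_const (v x)).comp continuous_fst).sub continuous_const).norm
      simpa using hcont.tendsto (u, v)
    refine tendsto_iff_norm_sub_tendsto_zero.2
      (squeeze_zero (fun _ ↦ norm_nonneg _) (fun p ↦ ?_) hlim)
    calc ‖(p.1 * p.2) x - (u * v) x‖
        = ‖p.1 (p.2 x - v x) + (p.1 (v x) - u (v x))‖ := by simp
      _ ≤ ‖p.2 x - v x‖ + ‖p.1 (v x) - u (v x)‖ := by
        simpa only [norm_apply] using norm_add_le (p.1 (p.2 x - v x)) (p.1 (v x) - u (v x))

lemma dense_isOfFinOrder_coprime {n : ℕ} (hn : n ≠ 0) :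
    Dense {w : UnitarySOT H | IsOfFinOrder w ∧ n.Coprime (orderOf w)} := by
  intro u
  have happrox (p : Finset H × ℕ) : ∃ t : UnitarySOT H, t ^ (n * p.2 + 1) = 1 ∧
      ∀ x ∈ p.1, ‖t x - u x‖ ≤ π / (n * p.2 + 1 : ℕ) * ‖x‖ := by
    obtain ⟨t, ht, htu⟩ := exists_pow_eq_one_and_norm_apply_sub_le (toUnitary u)
      p.1.finite_toSet (Nat.succ_ne_zero (n * p.2))
    exact ⟨toUnitary.symm t, ht, htu⟩
  choose t ht htu using happrox
  have hlim : Tendsto t (atTop ×ˢ atTop) (𝓝 u) := by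
    refine tendsto_nhds_iff.2 fun x ↦ tendsto_iff_norm_sub_tendsto_zero.2 ?_
    have hbound : Tendsto (fun p : Finset H × ℕ ↦ π / (n * p.2 + 1 : ℕ) * ‖x‖)
        (atTop ×ˢ atTop) (𝓝 0) := by
      have hN : Tendsto (fun M : ℕ ↦ n * M + 1) atTop atTop :=
        (tendsto_add_atTop_nat 1).comp (tendsto_id.const_mul_atTop' (Nat.pos_of_ne_zero hn))
      have hdiv := ((tendsto_const_div_atTop_nhds_zero_nat π).comp hN).mul_const ‖x‖
      rw [zero_mul] at hdiv
      exact hdiv.comp tendsto_snd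
    refine squeeze_zero' (.of_forall fun _ ↦ norm_nonneg _) ?_ hbound
    filter_upwards [tendsto_fst.eventually (eventually_ge_atTop {x})] with p hp
    exact htu p x (hp (Finset.mem_singleton_self x))
  refine mem_closure_of_tendsto hlim (.of_forall fun p ↦ ⟨?_, ?_⟩)
  · exact isOfFinOrder_iff_pow_eq_one.2 ⟨_, Nat.succ_pos _, ht p⟩
  · exact Nat.Coprime.coprime_dvd_right (orderOf_dvd_of_pow_eq_one (ht p)) (by simp)

lemma exists_pow_eq_and_norm_apply_sub_le {g : UnitarySOT H} (hg : IsOfFinOrder g) {n : ℕ}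
    (hn : n ≠ 0) (k : ℕ) : ∃ v : UnitarySOT H, v ^ n = g ∧
      ∀ x, ‖v x - (g ^ k) x‖ ≤ π / (2 * n) * ‖g x - ((g ^ k) ^ n) x‖ := by
  have hspec : (spectrum ℂ (toUnitary g : H →L[ℂ] H)).Finite := by
    obtain ⟨N, hN, hgN⟩ := isOfFinOrder_iff_pow_eq_one.1 hg
    refine finite_spectrum_of_isIntegral (.of_pow hN ?_)
    rw [← SubmonoidClass.coe_pow, ← map_pow, hgN, map_one, OneMemClass.coe_one]
    exact isIntegral_one
  obtain ⟨v, hv, c, hc, hvc⟩ := exists_pow_eq_pow_and_sub_eq_mul hspec hn 1 k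
  refine ⟨toUnitary.symm v, toUnitary.injective (by simpa using hv), fun x ↦ ?_⟩
  have hvx : (toUnitary.symm v) x - (g ^ k) x = c (g x - ((g ^ k) ^ n) x) := by
    simpa using DFunLike.congr_fun hvc x
  rw [hvx]
  exact c.le_of_opNorm_le hc _

lemma nearlyOpenAt_pow {n : ℕ} (hn : n ≠ 0) {w : UnitarySOT H} {k : ℕ} (hw : (w ^ n) ^ k = w) :
    NearlyOpenAt (fun u : UnitarySOT H ↦ u ^ n) w := by
  choose! r hr hrk using fun (g : UnitarySOT H) (hg : IsOfFinOrder g) ↦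
    exists_pow_eq_and_norm_apply_sub_le hg hn k
  have hD : Dense {g : UnitarySOT H | IsOfFinOrder g} :=
    (dense_isOfFinOrder_coprime hn).mono fun _ hg ↦ hg.1
  refine nearlyOpenAt_of_tendsto_section hD hr (tendsto_nhds_iff.2 fun x ↦ ?_)
  have hpow (m : ℕ) : Tendsto (fun g : UnitarySOT H ↦ (g ^ m) x)
      (𝓝[{g | IsOfFinOrder g}] (w ^ n)) (𝓝 (((w ^ n) ^ m) x)) :=
    ((continuous_eval_const x).comp (continuous_pow m)).tendsto' _ _ rfl |>.mono_left
      nhdsWithin_le_nhds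
  have hsub : Tendsto (fun g : UnitarySOT H ↦ r g x - (g ^ k) x)
      (𝓝[{g | IsOfFinOrder g}] (w ^ n)) (𝓝 0) := by
    have hbound : Tendsto (fun g : UnitarySOT H ↦ π / (2 * n) * ‖g x - ((g ^ k) ^ n) x‖)
        (𝓝[{g | IsOfFinOrder g}] (w ^ n)) (𝓝 0) := by
      simpa [pow_mul, hw] using ((hpow 1).sub (hpow (k * n))).norm.const_mul (π / (2 * n))
    refine squeeze_zero_norm' ?_ hbound
    filter_upwards [self_mem_nhdsWithin] with g hg using hrk g hg x
  simpa [hw] using hsub.add (hpow k)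

end UnitarySOT

theorem statement11_general (H : Type*) [NormedAddCommGroup H] [InnerProductSpace ℂ H]
    [CompleteSpace H] (n : ℕ) (hn : 0 < n) :
    ∀ S : Set (UnitarySOT H), S ∈ residual (UnitarySOT H) →
      (fun u : UnitarySOT H => u ^ n) ⁻¹' S ∈ residual (UnitarySOT H) := by
  have hdense : Dense {w : UnitarySOT H | NearlyOpenAt (fun u : UnitarySOT H ↦ u ^ n) w} := by
    refine (UnitarySOT.dense_isOfFinOrder_coprime hn.ne').mono fun w hw ↦ ?_
    obtain ⟨k, hk⟩ := exists_pow_eq_self_of_coprime hw.2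
    exact UnitarySOT.nearlyOpenAt_pow hn.ne' hk
  exact fun S hS ↦ tendsto_residual_of_dense_nearlyOpenAt (continuous_pow n) hdense hS

/-- Let `H` be a separable infinite-dimensional complex Hilbert space and `U(H)` its unitary
group with the strong operator topology. For every positive integer `n`, the map
`f_n : U(H) → U(H)`, `f_n(u) = uⁿ`, is category preserving: preimages of comeager sets are
comeager. -/
theorem statement11 (H : Type*) [NormedAddCommGroup H] [InnerProductSpace ℂ H]
    [CompleteSpace H] [TopologicalSpace.SeparableSpace H]
    (hinf : ¬ FiniteDimensional ℂ H) (n : ℕ) (hn : 0 < n) :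
    ∀ S : Set (UnitarySOT H), S ∈ residual (UnitarySOT H) →
      (fun u : UnitarySOT H => u ^ n) ⁻¹' S ∈ residual (UnitarySOT H) :=
  statement11_general H n hn
end

section
/- Let H be a separable infinite-dimensional complex Hilbert space and let U(H) be its unitary group with the strong operator topology. Then the set of all u ∈ U(H) whose conjugacy class {v u v⁻¹ : v ∈ U(H)} is dense in U(H) is itself dense in U(H). -/
open MeasureTheory Topology

/-!
The conjugacy class of a unitary `u` is dense as soon as `u` has orthonormal eigenvectors whose
eigenvalues approximate any finite list of unit scalars, repetitions allowed; a diagonal operator in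
which every term of a dense sequence of the circle occurs infinitely often is such a `u`.

Indeed, a strong neighbourhood of a unitary `w` only constrains the values on a finite-dimensional
subspace `F`, and there `w` agrees with a unitary `T` of a finite-dimensional subspace `E ⊇ F`.
Diagonalize `T` in an orthonormal basis of `E`, and let `v` be a unitary of `H` carrying
eigenvectors of `u` with almost the same eigenvalues to that basis: then `v u v⁻¹` is uniformly
close to `T` on `E`, hence to `w` on `F`. Finally, every conjugate of `u` has the same conjugacy
class as `u`, so the elements with dense conjugacy class are themselves dense.
-/

open Module Submodule

theorem dense_setOf_dense_conj {G : Type*} [Group G] [TopologicalSpace G] {u : G}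
    (hu : Dense {w : G | ∃ v : G, w = v * u * v⁻¹}) :
    Dense {u : G | Dense {w : G | ∃ v : G, w = v * u * v⁻¹}} := by
  refine hu.mono ?_
  rintro _ ⟨v, rfl⟩
  refine hu.mono ?_
  rintro _ ⟨z, rfl⟩
  exact ⟨z * v⁻¹, by group⟩

theorem norm_eq_one_of_linearIsometry_apply_eq_smul {𝕜 E : Type*} [NormedField 𝕜]
    [NormedAddCommGroup E] [NormedSpace 𝕜 E] (T : E →ₗᵢ[𝕜] E) {μ : 𝕜} {x : E} (hx : x ≠ 0)
    (hTx : T x = μ • x) : ‖μ‖ = 1 := by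
  have h : ‖μ‖ * ‖x‖ = ‖x‖ := by rw [← norm_smul, ← hTx, T.norm_map]
  exact (mul_eq_right₀ (norm_ne_zero_iff.2 hx)).1 h

section InnerProductSpace

variable {𝕜 E H : Type*} [RCLike 𝕜] [NormedAddCommGroup E] [InnerProductSpace 𝕜 E]
  [NormedAddCommGroup H] [InnerProductSpace 𝕜 H]

theorem linearIsometry_orthogonalFamily_eigenspaces (T : E →ₗᵢ[𝕜] E) :
    OrthogonalFamily 𝕜 (fun μ => End.eigenspace T.toLinearMap μ)
      fun μ => (End.eigenspace T.toLinearMap μ).subtypeₗᵢ := by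
  rintro μ ν hμν ⟨x, hx⟩ ⟨y, hy⟩
  rcases eq_or_ne x 0 with rfl | hx0
  · simp
  replace hx : T x = μ • x := End.mem_eigenspace_iff.1 hx
  replace hy : T y = ν • y := End.mem_eigenspace_iff.1 hy
  have hμ : ‖μ‖ = 1 := norm_eq_one_of_linearIsometry_apply_eq_smul T hx0 hx
  have hinner : μ * inner 𝕜 x y = ν * inner 𝕜 x y :=
    calc μ * inner 𝕜 x y = μ * inner 𝕜 (T x) (T y) := by rw [T.inner_map_map]
      _ = (μ * starRingEnd 𝕜 μ) * (ν * inner 𝕜 x y) := by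
        rw [hx, hy, inner_smul_left, inner_smul_right]; ring
      _ = ν * inner 𝕜 x y := by simp [RCLike.mul_conj, hμ]
  exact (mul_eq_mul_right_iff.1 hinner).resolve_left hμν

theorem linearIsometry_isSemisimple [FiniteDimensional 𝕜 E] (T : E →ₗᵢ[𝕜] E) :
    End.IsSemisimple T.toLinearMap := by
  refine End.isSemisimple_iff.2 fun p hp => ⟨pᗮ, fun y hy x hx => ?_, p.isCompl_orthogonal⟩
  have hsurj : Function.Surjective (T.toLinearMap.restrict hp) :=
    LinearMap.injective_iff_surjective.1 fun a b hab =>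
      Subtype.ext (T.injective (congrArg Subtype.val hab))
  obtain ⟨z, hz⟩ := hsurj ⟨x, hx⟩
  obtain rfl : T z = x := congrArg Subtype.val hz
  exact (T.inner_map_map z y).trans (hy z z.2)

theorem linearIsometry_exists_orthonormalBasis_eigenvectors {E : Type*} [NormedAddCommGroup E]
    [InnerProductSpace ℂ E] [FiniteDimensional ℂ E] (T : E →ₗᵢ[ℂ] E) :
    ∃ (b : OrthonormalBasis (Fin (finrank ℂ E)) ℂ E) (μ : Fin (finrank ℂ E) → Circle),
      ∀ i, T (b i) = (μ i : ℂ) • b i := by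
  classical
  have horth : OrthogonalFamily ℂ (fun μ : End.Eigenvalues T.toLinearMap => End.eigenspace _ μ.1)
      fun μ => (End.eigenspace T.toLinearMap μ.1).subtypeₗᵢ :=
    (linearIsometry_orthogonalFamily_eigenspaces T).comp Subtype.coe_injective
  have htop : ⨆ μ : End.Eigenvalues T.toLinearMap, End.eigenspace T.toLinearMap μ.1 = ⊤ :=
    (iSup_ne_bot_subtype _).trans (linearIsometry_isSemisimple T).iSup_eigenspace_eq_top
  have hint : DirectSum.IsInternal
      fun μ : End.Eigenvalues T.toLinearMap => End.eigenspace T.toLinearMap μ.1 :=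
    horth.isInternal_iff.2 (by rw [htop, top_orthogonal_eq_bot])
  let b := hint.subordinateOrthonormalBasis rfl horth
  have hb : ∀ i, ∃ μ : ℂ, T (b i) = μ • b i := fun i =>
    ⟨_, End.mem_eigenspace_iff.1 (hint.subordinateOrthonormalBasis_subordinate rfl i horth)⟩
  choose μ hμ using hb
  have hμ_norm : ∀ i, ‖μ i‖ = 1 := fun i =>
    norm_eq_one_of_linearIsometry_apply_eq_smul T (b.orthonormal.ne_zero i) (hμ i)
  exact ⟨b, fun i => ⟨μ i, mem_sphere_zero_iff_norm.2 (hμ_norm i)⟩, hμ⟩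

theorem norm_le_of_apply_orthonormalBasis_eq_smul {ι : Type*} [Fintype ι]
    (b : OrthonormalBasis ι 𝕜 E) {f : ι → H} (hf : Orthonormal 𝕜 f) (A : E →ₗ[𝕜] H) {c : ι → 𝕜}
    (hA : ∀ i, A (b i) = c i • f i) {ε : ℝ} (hε : 0 ≤ ε) (hc : ∀ i, ‖c i‖ ≤ ε) (x : E) :
    ‖A x‖ ≤ ε * ‖x‖ := by
  have hAx : A x = ∑ i, (inner 𝕜 (b i) x * c i) • f i := by
    conv_lhs => rw [← b.sum_repr' x]
    simp only [map_sum, map_smul, hA, smul_smul]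
  refine le_of_sq_le_sq ?_ (by positivity)
  calc ‖A x‖ ^ 2 = ∑ i, (‖inner 𝕜 (b i) x‖ * ‖c i‖) ^ 2 := by
        simpa only [hAx, norm_mul] using!
          hf.orthogonalFamily.norm_sum (fun i => inner 𝕜 (b i) x * c i) Finset.univ
    _ ≤ ∑ i, (‖inner 𝕜 (b i) x‖ * ε) ^ 2 := by gcongr with i; exact hc i
    _ = (ε * ‖x‖) ^ 2 := by
        simp only [mul_pow, ← Finset.sum_mul, b.sum_sq_norm_inner_right]
        ring

theorem exists_finiteDimensional_linearIsometryEquiv_extending (F : Submodule 𝕜 H)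
    [FiniteDimensional 𝕜 F] (L : F →ₗᵢ[𝕜] H) :
    ∃ (E : Submodule 𝕜 H) (_ : FiniteDimensional 𝕜 E) (hFE : F ≤ E) (T : E ≃ₗᵢ[𝕜] E),
      ∀ x : F, (T (inclusion hFE x) : H) = L x := by
  let E : Submodule 𝕜 H := F ⊔ L.toLinearMap.range
  have hLE : ∀ x, L x ∈ E := fun x => mem_sup_right ⟨x, rfl⟩
  have hFE : F ≤ E := le_sup_left
  let S : Submodule 𝕜 E := F.comap E.subtype
  let LE : S →ₗᵢ[𝕜] E :=
    { toLinearMap := (L.toLinearMap ∘ₗ (comapSubtypeEquivOfLe hFE).toLinearMap).codRestrict E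
        fun x => hLE _
      norm_map' := fun x => L.norm_map _ }
  exact ⟨E, inferInstance, hFE, LE.extend.toLinearIsometryEquiv rfl, fun x =>
    congrArg Subtype.val (LE.extend_apply ⟨inclusion hFE x, x.2⟩)⟩

theorem exists_linearIsometryEquiv_extending_submodule_linearIsometryEquiv (E : Submodule 𝕜 H)
    [E.HasOrthogonalProjection] (T : E ≃ₗᵢ[𝕜] E) :
    ∃ v : H ≃ₗᵢ[𝕜] H, ∀ x : E, v x = T x := by
  let D := E.orthogonalDecomposition
  refine ⟨(D.trans (.withLpProdCongr 2 T (.refl 𝕜 Eᗮ))).trans D.symm, fun x => ?_⟩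
  simp [D]

theorem exists_linearIsometryEquiv_apply_orthonormal_eq {ι : Type*} [Finite ι] {e f : ι → H}
    (he : Orthonormal 𝕜 e) (hf : Orthonormal 𝕜 f) : ∃ v : H ≃ₗᵢ[𝕜] H, ∀ i, v (e i) = f i := by
  let F := span 𝕜 (Set.range e)
  have : FiniteDimensional 𝕜 F := .span_of_finite 𝕜 (Set.finite_range e)
  let b : Basis ι 𝕜 F := .span he.linearIndependent
  have hb : ∀ i, (b i : H) = e i := fun i =>
    congrArg Subtype.val (Basis.span_apply he.linearIndependent i)
  have hb_orth : Orthonormal 𝕜 b := 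
    F.subtypeₗᵢ.orthonormal_comp_iff.1 (by rwa [← funext hb] at he)
  have hbf : b.constr 𝕜 f ∘ b = f := funext (b.constr_basis 𝕜 f)
  let L : F →ₗᵢ[𝕜] H := (b.constr 𝕜 f).isometryOfOrthonormal hb_orth (by rwa [hbf])
  obtain ⟨E, _, hFE, T, hT⟩ := exists_finiteDimensional_linearIsometryEquiv_extending F L
  obtain ⟨v, hv⟩ := exists_linearIsometryEquiv_extending_submodule_linearIsometryEquiv E T
  refine ⟨v, fun i => ?_⟩
  calc v (e i) = T (inclusion hFE (b i)) := by rw [← hv, coe_inclusion, hb]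
    _ = L (b i) := hT (b i)
    _ = f i := b.constr_basis 𝕜 f i

theorem hilbertBasis_exists_linearIsometryEquiv_apply_eq_smul [CompleteSpace H] {ι : Type*}
    (b : HilbertBasis ι 𝕜 H) {c : ι → 𝕜} (hc : ∀ i, ‖c i‖ = 1) :
    ∃ u : H ≃ₗᵢ[𝕜] H, ∀ i, u (b i) = c i • b i := by
  classical
  have hc0 : ∀ i, c i ≠ 0 := fun i => norm_ne_zero_iff.1 (by simp [hc i])
  have horth : Orthonormal 𝕜 fun i => c i • b i :=
    ⟨fun i => by rw [norm_smul, hc, b.orthonormal.1, one_mul], fun i j hij => by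
      simp [inner_smul_left, inner_smul_right, b.orthonormal.2 hij]⟩
  have hspan : span 𝕜 (Set.range b) ≤ span 𝕜 (Set.range fun i => c i • b i) := by
    refine span_le.2 (Set.range_subset_iff.2 fun i => ?_)
    exact (smul_mem_iff _ (hc0 i)).1 (subset_span (Set.mem_range_self i))
  let b' : HilbertBasis ι 𝕜 H :=
    .mk horth (b.dense_span.ge.trans (topologicalClosure_mono hspan))
  exact ⟨b.repr.trans b'.repr.symm, fun i => by simp [b', HilbertBasis.repr_self]⟩

theorem exists_infinite_hilbertBasis [CompleteSpace H] (hinf : ¬ FiniteDimensional 𝕜 H) :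
    ∃ (ι : Set H) (_ : HilbertBasis ι 𝕜 H), Infinite ι := by
  obtain ⟨ι, b, -⟩ := exists_hilbertBasis 𝕜 H
  refine ⟨ι, b, not_finite_iff_infinite.1 fun hfin => hinf ?_⟩
  have := Fintype.ofFinite ι
  exact b.toOrthonormalBasis.toBasis.finiteDimensional_of_finite

end InnerProductSpace

section ComplexHilbertSpace

variable {H : Type*} [NormedAddCommGroup H] [InnerProductSpace ℂ H]

/-- A unitary approximates all finite spectra if every finite list of unit scalars is, entry by
entry and up to an arbitrarily small error, the list of eigenvalues of some orthonormal list of its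
eigenvectors. As entries may repeat, this combines density of the eigenvalues in the circle with a
multiplicity condition. -/
def ApproximatesFiniteSpectra (u : H ≃ₗᵢ[ℂ] H) : Prop :=
  ∀ (n : ℕ) (μ : Fin n → Circle) (ε : ℝ), 0 < ε → ∃ (e : Fin n → H) (ν : Fin n → Circle),
    Orthonormal ℂ e ∧ (∀ i, u (e i) = (ν i : ℂ) • e i) ∧ ∀ i, ‖(ν i : ℂ) - μ i‖ ≤ ε

theorem exists_approximatesFiniteSpectra [CompleteSpace H] (hinf : ¬ FiniteDimensional ℂ H) :
    ∃ u : H ≃ₗᵢ[ℂ] H, ApproximatesFiniteSpectra u := by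
  obtain ⟨ι, b, _⟩ := exists_infinite_hilbertBasis hinf
  obtain ⟨σ⟩ : Nonempty (ℕ × ι ≃ ι) := Cardinal.eq.1 (by simp)
  let d : ℕ → Circle := TopologicalSpace.denseSeq Circle
  obtain ⟨u, hu⟩ := hilbertBasis_exists_linearIsometryEquiv_apply_eq_smul b
    (c := fun i => (d (σ.symm i).1 : ℂ)) fun i => Circle.norm_coe _
  refine ⟨u, fun n μ ε hε => ?_⟩
  choose k hk using fun i =>
    (TopologicalSpace.denseRange_denseSeq Circle).exists_dist_lt (μ i) hε
  have hν : ∀ i, ‖(d (k i) : ℂ) - μ i‖ ≤ ε := fun i => by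
    rw [← dist_eq_norm, dist_comm]
    exact (hk i).le
  let j : Fin n ↪ ι := Fin.valEmbedding.trans (Infinite.natEmbedding ι)
  have hinj : Function.Injective fun i => σ (k i, j i) := fun i i' h =>
    j.injective (congrArg Prod.snd (σ.injective h))
  exact ⟨fun i => b (σ (k i, j i)), fun i => d (k i), b.orthonormal.comp _ hinj,
    fun i => by simp [hu], hν⟩

theorem ApproximatesFiniteSpectra.exists_conj_norm_sub_le {u : H ≃ₗᵢ[ℂ] H}
    (hu : ApproximatesFiniteSpectra u) (w : H →ₗᵢ[ℂ] H) (F : Submodule ℂ H)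
    [FiniteDimensional ℂ F] {ε : ℝ} (hε : 0 < ε) :
    ∃ v : H ≃ₗᵢ[ℂ] H, ∀ x ∈ F, ‖(v * u * v⁻¹) x - w x‖ ≤ ε * ‖x‖ := by
  obtain ⟨E, _, hFE, T, hT⟩ :=
    exists_finiteDimensional_linearIsometryEquiv_extending F (w.comp F.subtypeₗᵢ)
  obtain ⟨b, μ, hb⟩ := linearIsometry_exists_orthonormalBasis_eigenvectors T.toLinearIsometry
  obtain ⟨e, ν, he, hue, hν⟩ := hu _ μ ε hε
  have hb_orth : Orthonormal ℂ fun i => (b i : H) := b.orthonormal.comp_linearIsometry E.subtypeₗᵢ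
  obtain ⟨v, hv⟩ := exists_linearIsometryEquiv_apply_orthonormal_eq he hb_orth
  have hconj : ∀ i, (v * u * v⁻¹) (b i) = (ν i : ℂ) • (b i : H) := fun i =>
    calc v (u (v.symm (b i))) = v (u (e i)) := by rw [← hv, v.symm_apply_apply]
      _ = (ν i : ℂ) • (b i : H) := by rw [hue, map_smul, hv]
  let A : E →ₗ[ℂ] H := (v * u * v⁻¹).toLinearMap ∘ₗ E.subtype - E.subtype ∘ₗ T.toLinearMap
  have hA : ∀ i, A (b i) = ((ν i : ℂ) - μ i) • (b i : H) := fun i =>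
    calc (v * u * v⁻¹) (b i) - (T (b i) : H)
        = (ν i : ℂ) • (b i : H) - (μ i : ℂ) • (b i : H) :=
          congrArg₂ _ (hconj i) (congrArg Subtype.val (hb i))
      _ = ((ν i : ℂ) - μ i) • (b i : H) := (sub_smul ..).symm
  refine ⟨v, fun x hx => ?_⟩
  calc ‖(v * u * v⁻¹) x - w x‖ = ‖A (inclusion hFE ⟨x, hx⟩)‖ :=
        congrArg (fun y => ‖(v * u * v⁻¹) x - y‖) (hT ⟨x, hx⟩).symm
    _ ≤ ε * ‖x‖ := norm_le_of_apply_orthonormalBasis_eq_smul b hb_orth A hA hε.le hν _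

end ComplexHilbertSpace

namespace UnitarySOT

variable {H : Type*} [NormedAddCommGroup H] [InnerProductSpace ℂ H] [CompleteSpace H]

/-- The unitary group as the group of linear isometric automorphisms of `H`; this is
`Unitary.linearIsometryEquiv` on the type synonym carrying the strong operator topology. -/
noncomputable def toLinearIsometryEquiv : UnitarySOT H ≃* (H ≃ₗᵢ[ℂ] H) :=
  Unitary.linearIsometryEquiv (𝕜 := ℂ) (H := H)

theorem isInducing_coe_toLinearIsometryEquiv :
    IsInducing fun (u : UnitarySOT H) (x : H) => toLinearIsometryEquiv u x :=
  ⟨rfl⟩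

theorem dense_of_forall_finiteDimensional_exists_norm_sub_le {A : Set (UnitarySOT H)}
    (hA : ∀ (w : UnitarySOT H) (F : Submodule ℂ H) [FiniteDimensional ℂ F] (ε : ℝ), 0 < ε →
      ∃ a ∈ A, ∀ x ∈ F, ‖toLinearIsometryEquiv a x - toLinearIsometryEquiv w x‖ ≤ ε * ‖x‖) :
    Dense A := by
  intro w
  rw [isInducing_coe_toLinearIsometryEquiv.closure_eq_preimage_closure_image, Set.mem_preimage,
    mem_closure_iff_nhds]
  intro t ht
  rw [nhds_pi, Filter.mem_pi] at ht
  obtain ⟨I, hI, s, hs, hst⟩ := ht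
  have hsmall : ∀ x, ∀ᶠ ε : ℝ in 𝓝[>] 0,
      Metric.closedBall (toLinearIsometryEquiv w x) (ε * ‖x‖) ⊆ s x := by
    intro x
    have hlim : Filter.Tendsto (fun ε : ℝ => ε * ‖x‖) (𝓝[>] 0) (𝓝 0) := 
      ((continuous_mul_const ‖x‖).tendsto' 0 0 (zero_mul _)).mono_left nhdsWithin_le_nhds
    obtain ⟨δ, hδ, hδs⟩ := Metric.nhds_basis_closedBall.mem_iff.1 (hs x)
    filter_upwards [hlim.eventually_le_const hδ] with ε hε
    exact (Metric.closedBall_subset_closedBall hε).trans hδs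
  obtain ⟨ε, hεs, hε⟩ :=
    (((hI.eventually_all).2 fun x _ => hsmall x).and self_mem_nhdsWithin).exists
  have : FiniteDimensional ℂ (span ℂ I) := .span_of_finite ℂ hI
  obtain ⟨a, ha, haw⟩ := hA w (span ℂ I) ε hε
  exact ⟨_, hst fun x hx => hεs x hx (mem_closedBall_iff_norm.2 (haw x (subset_span hx))),
    Set.mem_image_of_mem _ ha⟩

theorem dense_conj_of_approximatesFiniteSpectra {u : UnitarySOT H}
    (hu : ApproximatesFiniteSpectra (toLinearIsometryEquiv u)) :
    Dense {w : UnitarySOT H | ∃ v : UnitarySOT H, w = v * u * v⁻¹} := by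
  refine dense_of_forall_finiteDimensional_exists_norm_sub_le fun w F _ ε hε => ?_
  obtain ⟨v, hv⟩ := hu.exists_conj_norm_sub_le (toLinearIsometryEquiv w).toLinearIsometry F hε
  refine ⟨_, ⟨toLinearIsometryEquiv.symm v, rfl⟩, ?_⟩
  simp only [map_mul, map_inv, MulEquiv.apply_symm_apply]
  exact hv

end UnitarySOT

theorem statement12_general (H : Type*) [NormedAddCommGroup H] [InnerProductSpace ℂ H]
    [CompleteSpace H] (hinf : ¬ FiniteDimensional ℂ H) :
    Dense {u : UnitarySOT H | Dense {w : UnitarySOT H | ∃ v : UnitarySOT H, w = v * u * v⁻¹}} := by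
  obtain ⟨u, hu⟩ := exists_approximatesFiniteSpectra hinf
  rw [← UnitarySOT.toLinearIsometryEquiv.apply_symm_apply u] at hu
  exact dense_setOf_dense_conj (UnitarySOT.dense_conj_of_approximatesFiniteSpectra hu)

/-- Let `H` be a separable infinite-dimensional complex Hilbert space and `U(H)` its unitary
group with the strong operator topology. The set of `u ∈ U(H)` whose conjugacy class
`{v u v⁻¹ : v ∈ U(H)}` is dense in `U(H)` is itself dense in `U(H)`. -/
theorem statement12 (H : Type*) [NormedAddCommGroup H] [InnerProductSpace ℂ H]
    [CompleteSpace H] [TopologicalSpace.SeparableSpace H]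
    (hinf : ¬ FiniteDimensional ℂ H) :
    Dense {u : UnitarySOT H | Dense {w : UnitarySOT H | ∃ v : UnitarySOT H, w = v * u * v⁻¹}} :=
  statement12_general H hinf
end
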